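/- Let p* ∈ I be optimal over the class of threshold stopping times, suppose ψ is differentiable at p*, and suppose g is differentiable at p*. Then the function v(x) := sup_{p∈I} V(p;x) (which equals h(p*)ψ(x) for x < p* and g(x) for x ≥ p*) is differentiable at p* and v'(p*) = g'(p*). -/

import Mathlib

open Set

open scoped Topology

/-!
Comparing `pstar` with a threshold `p`, started at `p` itself when `p < pstar` and at any point
below `pstar` otherwise, shows that `pstar` maximises `g / ψ`. The first-order condition there is
`(g pstar / ψ pstar) * ψ' = g'`: the two branches of the value function have the same slope at
`pstar`, where they also agree in value.
-/

section Threshold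

variable {α K : Type*} [LinearOrder α] [Field K] {g ψ : α → K} {p q x : α}

/-- The payoff `V(p; x)` of stopping at the threshold `p` when started from `x`, for the reward `g`.
The expected discount factor until `p > x` is reached is encoded as `ψ x / ψ p`. -/
def thresholdValue (g ψ : α → K) (p x : α) : K :=
  if x < p then g p / ψ p * ψ x else g x

theorem thresholdValue_of_lt (h : x < p) : thresholdValue g ψ p x = g p / ψ p * ψ x :=
  if_pos h

theorem thresholdValue_of_le (h : p ≤ x) : thresholdValue g ψ p x = g x :=
  if_neg h.not_gt

variable [LinearOrder K]

/-- Optimality of the threshold `q` among the thresholds in `I`, simultaneously for all starting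
points in `I`. -/
def IsOptimalThreshold (g ψ : α → K) (I : Set α) (q : α) : Prop :=
  ∀ p ∈ I, ∀ x ∈ I, thresholdValue g ψ p x ≤ thresholdValue g ψ q x

theorem IsOptimalThreshold.isMaxOn_div [IsStrictOrderedRing K] {I : Set α}
    (hq : IsOptimalThreshold g ψ I q) (hψ : ∀ x ∈ I, 0 < ψ x) (hx : x ∈ I) (hxq : x < q) :
    IsMaxOn (g / ψ) I q := by
  intro p hp
  change g p / ψ p ≤ g q / ψ q
  rcases lt_or_ge p q with hpq | hqp
  · have started_at_p := hq p hp p hp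
    rw [thresholdValue_of_le le_rfl, thresholdValue_of_lt hpq] at started_at_p
    exact (div_le_iff₀ (hψ p hp)).2 started_at_p
  · have started_at_x := hq p hp x hx
    rw [thresholdValue_of_lt (hxq.trans_le hqp), thresholdValue_of_lt hxq] at started_at_x
    exact le_of_mul_le_mul_right started_at_x (hψ x hx)

end Threshold

theorem div_mul_deriv_eq_of_isLocalMax_div {g ψ : ℝ → ℝ} {a g' ψ' : ℝ}
    (hmax : IsLocalMax (g / ψ) a) (hg : HasDerivAt g g' a) (hψ : HasDerivAt ψ ψ' a)
    (hψa : ψ a ≠ 0) : g a / ψ a * ψ' = g' := by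
  have first_order : (g' * ψ a - g a * ψ') / ψ a ^ 2 = 0 :=
    hmax.hasDerivAt_eq_zero (hg.div hψ hψa)
  have cross_mul : g' * ψ a - g a * ψ' = 0 :=
    (div_eq_zero_iff.1 first_order).resolve_right (pow_ne_zero 2 hψa)
  rw [div_mul_eq_mul_div, div_eq_iff hψa]
  exact (sub_eq_zero.1 cross_mul).symm

theorem hasDerivAt_ite_lt {𝕜 F : Type*} [NontriviallyNormedField 𝕜] [LinearOrder 𝕜]
    [NormedAddCommGroup F] [NormedSpace 𝕜 F] {f₁ f₂ : 𝕜 → F} {f' : F} {a : 𝕜}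
    (hf₁ : HasDerivAt f₁ f' a) (hf₂ : HasDerivAt f₂ f' a)
    (ha : f₁ a = f₂ a) : HasDerivAt (fun x => if x < a then f₁ x else f₂ x) f' a := by
  have eqOn_left : ∀ x ∈ Iic a, (if x < a then f₁ x else f₂ x) = f₁ x := by
    intro x hx
    rcases (mem_Iic.1 hx).lt_or_eq with hlt | rfl
    · exact if_pos hlt
    · rw [if_neg (lt_irrefl x), ha]
  have eqOn_right : ∀ x ∈ Ici a, (if x < a then f₁ x else f₂ x) = f₂ x :=
    fun x hx => if_neg (mem_Ici.1 hx).not_gt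
  rw [← hasDerivWithinAt_univ, ← Iic_union_Ici (a := a)]
  exact (hf₁.hasDerivWithinAt.congr eqOn_left (eqOn_left a self_mem_Iic)).union
    (hf₂.hasDerivWithinAt.congr eqOn_right (eqOn_right a self_mem_Ici))

theorem stmt_4_general {I : Set ℝ} {g ψ : ℝ → ℝ} {q g' ψ' : ℝ} (hI : I ∈ 𝓝 q)
    (hψpos : ∀ x ∈ I, 0 < ψ x) (hq : IsOptimalThreshold g ψ I q)
    (hψ : HasDerivAt ψ ψ' q) (hg : HasDerivAt g g' q) :
    HasDerivAt (thresholdValue g ψ q) g' q := by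
  have hψq : ψ q ≠ 0 := (hψpos q (mem_of_mem_nhds hI)).ne'
  obtain ⟨x, hxq, hx⟩ : ∃ x < q, x ∈ I := Filter.Eventually.exists_lt hI
  have hmax : IsLocalMax (g / ψ) q := (hq.isMaxOn_div hψpos hx hxq).isLocalMax hI
  have smooth_fit : g q / ψ q * ψ' = g' := div_mul_deriv_eq_of_isLocalMax_div hmax hg hψ hψq
  have left_branch : HasDerivAt (fun x => g q / ψ q * ψ x) g' q :=
    smooth_fit ▸ hψ.const_mul (g q / ψ q)
  exact hasDerivAt_ite_lt left_branch hg (div_mul_cancel₀ (g q) hψq)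

/-- Remark after Corollary 1: if `g` is differentiable at the optimal threshold `pstar`,
then the value function `v` is differentiable at `pstar` with `v'(pstar) = g'(pstar)`. -/
theorem stmt_4 (I : Set ℝ) (hIopen : IsOpen I) (hIconn : I.OrdConnected)
    (hIne : I.Nonempty)
    (g ψ : ℝ → ℝ) (hψpos : ∀ x ∈ I, 0 < ψ x) (hψmono : StrictMonoOn ψ I)
    (V : ℝ → ℝ → ℝ)
    (hV : ∀ p ∈ I, ∀ x ∈ I, V p x = if x < p then (g p / ψ p) * ψ x else g x)
    (pstar : ℝ) (hpstar : pstar ∈ I)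
    (hopt : ∀ p ∈ I, ∀ x ∈ I, V p x ≤ V pstar x)
    (ψ' : ℝ) (hψ' : HasDerivAt ψ ψ' pstar)
    (g' : ℝ) (hg' : HasDerivAt g g' pstar)
    (v : ℝ → ℝ)
    (hv : ∀ x, v x = if x < pstar then (g pstar / ψ pstar) * ψ x else g x) :
    HasDerivAt v g' pstar := by
  have hq : IsOptimalThreshold g ψ I pstar := fun p hp x hx => by
    simpa only [thresholdValue, hV p hp x hx, hV pstar hpstar x hx] using hopt p hp x hx
  exact funext hv ▸ stmt_4_general (hIopen.mem_nhds hpstar) hψpos hq hψ' hg'
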